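/- arXiv:math/9911202 — 2 statements merged into one kernel-verified Lean document; each statement's English description precedes it below -/
import Mathlib

section
/- Let Γ = ℤ^d and K̃ → K a free simplicial Γ-cover of a finite complex. Let Γ ⊇ Γ₁ ⊇ Γ₂ ⊇ … be finite-index subgroups with ⋂ Γ_i = {0}, and X_i = K̃/Γ_i. Then b_E^p(K) = lim_{i→∞} dim_{𝔽₂} H^p(X_i, 𝔽₂) / [Γ : Γ_i]. (Approximation of entropy Betti numbers by finite covers.) -/
open Filter Topology Pointwise

instance : TopologicalSpace (ZMod 2) := ⊥
instance : DiscreteTopology (ZMod 2) := ⟨rfl⟩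

variable {G : Type*} [Group G] [DecidableEq G]

/-- Left translation action on functions. -/
def ltv (M : Type*) (γ : G) (f : G → M) : G → M := fun δ => f (γ⁻¹ * δ)

/-- A `Γ`-invariant linear subspace. -/
def InvariantSub (M : Type*) [AddCommGroup M] [Module (ZMod 2) M]
    (W : Submodule (ZMod 2) (G → M)) : Prop :=
  ∀ γ : G, ∀ f ∈ W, ltv M γ f ∈ W

/-- The space of restrictions of elements of `W` to `Λ`. -/
noncomputable def resSpace {M : Type*} [AddCommGroup M] [Module (ZMod 2) M]
    (W : Submodule (ZMod 2) (G → M)) (Λ : Finset G) :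
    Submodule (ZMod 2) (↥Λ → M) :=
  W.map (LinearMap.funLeft (ZMod 2) M (Subtype.val : ↥Λ → G))

/-- The entropy of a `Γ`-invariant linear subspace, along a Følner exhaustion. -/
noncomputable def entropy {M : Type*} [AddCommGroup M] [Module (ZMod 2) M]
    (F : ℕ → Finset G) (W : Submodule (ZMod 2) (G → M)) : ℝ :=
  Filter.limsup
    (fun n => (Module.finrank (ZMod 2) ↥(resSpace W (F n)) : ℝ) / (F n).card) atTop

/-- `S` is a finite symmetric generating set containing `1`. -/
def SymmGen (S : Finset G) : Prop :=
  (1 : G) ∈ S ∧ (∀ s ∈ S, s⁻¹ ∈ S) ∧ Subgroup.closure (S : Set G) = ⊤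

/-- A Følner exhaustion with respect to the word metric of `S`:
`S ^ r * F n` is the `r`-neighbourhood of `F n`. -/
structure FolnerSeq (S : Finset G) (F : ℕ → Finset G) : Prop where
  one_mem : (1 : G) ∈ F 0
  mono : Monotone F
  exhaust : ∀ g : G, ∃ n, g ∈ F n
  folner : ∀ r : ℕ,
    Tendsto (fun n => (((S ^ r * F n) \ F n).card : ℝ) / (F n).card) atTop (𝓝 0)

variable (F : ℕ → Finset G)

/-- The `p`-th entropy Betti number of an equivariant cochain complex
`(Γ → 𝔽₂)^{k 0} → (Γ → 𝔽₂)^{k 1} → …`: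
`b_E^p = h_Γ(Ker d_p) − h_Γ(Im d_{p−1})` (with `Im d_{−1} = 0`). -/
noncomputable def bE
    (k : ℕ → ℕ)
    (d : ∀ p : ℕ, (G → Fin (k p) → ZMod 2) →ₗ[ZMod 2] (G → Fin (k (p + 1)) → ZMod 2))
    (p : ℕ) : ℝ :=
  entropy F (LinearMap.ker (d p)) -
    (match p with
     | 0 => 0
     | q + 1 => entropy F (LinearMap.range (d q)))

/-- The submodule of functions fixed by the left translation action of a subgroup `H`. -/
def fixSub (M : Type*) [AddCommGroup M] [Module (ZMod 2) M] (H : Subgroup G) :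
    Submodule (ZMod 2) (G → M) :=
  ⨅ (γ : G) (_ : γ ∈ H),
    LinearMap.ker ((LinearMap.funLeft (ZMod 2) M fun δ => γ⁻¹ * δ) - LinearMap.id)

section Helpers

variable {A : Type*} [CommGroup A] [DecidableEq A]

theorem mem_fixSub_iff {M : Type*} [AddCommGroup M] [Module (ZMod 2) M] (H : Subgroup A)
    (f : A → M) : f ∈ fixSub M H ↔ ∀ γ ∈ H, ∀ δ, f (γ⁻¹ * δ) = f δ := by
  simp only [fixSub, Submodule.mem_iInf, LinearMap.mem_ker, LinearMap.sub_apply, sub_eq_zero]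
  constructor
  · intro h γ hγ δ
    exact congrFun (h γ hγ) δ
  · intro h γ hγ
    funext δ
    exact h γ hγ δ

theorem fix_congr {M : Type*} [AddCommGroup M] [Module (ZMod 2) M] {H : Subgroup A}
    {f : A → M} (hf : f ∈ fixSub M H) {x y : A}
    (hxy : (QuotientGroup.mk x : A ⧸ H) = QuotientGroup.mk y) : f x = f y := by
  rw [mem_fixSub_iff] at hf
  have h1 : x⁻¹ * y ∈ H := QuotientGroup.eq.1 hxy
  have h2 := hf _ h1 y
  rw [← h2]
  congr 1
  simp

/-- The fixed functions are the functions on the quotient. -/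
theorem fixSub_eq_range (a : ℕ) (H : Subgroup A) :
    fixSub (Fin a → ZMod 2) H = LinearMap.range
      (LinearMap.funLeft (ZMod 2) (Fin a → ZMod 2) (QuotientGroup.mk : A → A ⧸ H)) := by
  ext f
  constructor
  · intro hf
    refine ⟨fun q => f q.out, ?_⟩
    funext x
    exact fix_congr hf (by simp)
  · rintro ⟨g, rfl⟩
    rw [mem_fixSub_iff]
    intro γ hγ δ
    simp only [LinearMap.funLeft_apply]
    congr 1
    rw [QuotientGroup.eq]
    simpa [mul_comm, mul_assoc, mul_left_comm] using hγ

theorem finite_fixSub (a : ℕ) (H : Subgroup A) (hH : H.index ≠ 0) :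
    Module.Finite (ZMod 2) (fixSub (Fin a → ZMod 2) H) := by
  haveI : H.FiniteIndex := ⟨hH⟩
  haveI : Fintype (A ⧸ H) := Fintype.ofFinite _
  rw [fixSub_eq_range]
  infer_instance

theorem finrank_fixSub (a : ℕ) (H : Subgroup A) (hH : H.index ≠ 0) :
    Module.finrank (ZMod 2) (fixSub (Fin a → ZMod 2) H) = a * H.index := by
  haveI : H.FiniteIndex := ⟨hH⟩
  haveI : Fintype (A ⧸ H) := Fintype.ofFinite _
  rw [fixSub_eq_range, LinearMap.finrank_range_of_inj
    (LinearMap.funLeft_injective_of_surjective _ _ _ QuotientGroup.mk_surjective)]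
  rw [Module.finrank_pi_fintype]
  simp [Subgroup.index_eq_card, mul_comm]

/-- Shearer type inequality. -/
theorem shearer (a : ℕ) (H : Subgroup A) (hH : H.index ≠ 0)
    (K : Submodule (ZMod 2) (A → Fin a → ZMod 2))
    (hK : InvariantSub _ K) (hKH : K ≤ fixSub _ H)
    (B : Finset A) (hB : Set.InjOn (QuotientGroup.mk : A → A ⧸ H) B) :
    B.card * Module.finrank (ZMod 2) K ≤ H.index * Module.finrank (ZMod 2) (resSpace K B) := by
  classical
  haveI : H.FiniteIndex := ⟨hH⟩
  haveI : Fintype (A ⧸ H) := Fintype.ofFinite _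
  haveI := finite_fixSub a H hH
  haveI : Module.Finite (ZMod 2) K := Submodule.finiteDimensional_of_le hKH
  let ev : A × Fin a → Module.Dual (ZMod 2) K := fun x =>
    (LinearMap.proj x.2 ∘ₗ LinearMap.proj x.1) ∘ₗ K.subtype
  have hev : ∀ x (f : K), ev x f = f.1 x.1 x.2 := fun x f => rfl
  obtain ⟨κ, c, hcinj, hspan, hli⟩ := exists_linearIndependent' (ZMod 2) ev
  haveI : Finite κ := hli.finite
  haveI : Fintype κ := Fintype.ofFinite κ
  have hcard : Module.finrank (ZMod 2) K ≤ Fintype.card κ := by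
    have hinj : Function.Injective (LinearMap.pi (fun t => ev (c t)) : K →ₗ[ZMod 2] κ → ZMod 2) := by
      rw [injective_iff_map_eq_zero]
      intro f hf
      have h0 : ∀ φ ∈ Submodule.span (ZMod 2) (Set.range (ev ∘ c)), φ f = 0 := by
        intro φ hφ
        induction hφ using Submodule.span_induction with
        | mem x hx => obtain ⟨t, rfl⟩ := hx; exact congrFun hf t
        | zero => rfl
        | add x y _ _ hx hy => simp [hx, hy]
        | smul r x _ hx => simp [hx]
      rw [hspan] at h0
      ext x j
      exact h0 _ (Submodule.subset_span ⟨(x, j), rfl⟩)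
    simpa using LinearMap.finrank_le_finrank_of_injective hinj
  let Bq : Finset (A ⧸ H) := B.image QuotientGroup.mk
  have hBq : Bq.card = B.card := Finset.card_image_of_injOn hB
  let s : A ⧸ H → Finset κ := fun q => Finset.univ.filter fun t =>
    (QuotientGroup.mk (c t).1 : A ⧸ H) * q⁻¹ ∈ Bq
  have hs : ∀ q, (s q).card ≤ Module.finrank (ZMod 2) (resSpace K B) := by
    intro q
    obtain ⟨g, rfl⟩ := QuotientGroup.mk_surjective q
    let ψ : K →ₗ[ZMod 2] (↥B → Fin a → ZMod 2) :=
      (LinearMap.funLeft (ZMod 2) (Fin a → ZMod 2) (fun b : ↥B => g * b.1)) ∘ₗ K.subtype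
    have h1 : LinearMap.range ψ ≤ resSpace K B := by
      rintro _ ⟨f, rfl⟩
      refine ⟨ltv _ g⁻¹ f.1, hK _ _ f.2, ?_⟩
      funext b
      simp [ψ, ltv, LinearMap.funLeft_apply]
    have h2 : (s (QuotientGroup.mk g)).card ≤
        Module.finrank (ZMod 2) (LinearMap.range ψ.dualMap) := by
      have hli' : LinearIndependent (ZMod 2)
          (fun t : s (QuotientGroup.mk g) => ev (c t.1)) :=
        hli.comp (fun t : s (QuotientGroup.mk g) => t.1) Subtype.val_injective
      have h3 := finrank_span_eq_card hli'
      rw [Fintype.card_coe] at h3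
      rw [← h3]
      apply Submodule.finrank_mono
      rw [Submodule.span_le]
      rintro _ ⟨⟨t, ht⟩, rfl⟩
      simp only [s, Finset.mem_filter, Finset.mem_univ, true_and, Bq, Finset.mem_image] at ht
      obtain ⟨b, hb, hbt⟩ := ht
      refine ⟨LinearMap.proj (c t).2 ∘ₗ LinearMap.proj (⟨b, hb⟩ : ↥B), ?_⟩
      ext f
      have : f.1 (g * b) = f.1 (c t).1 := by
        apply fix_congr (hKH f.2)
        rw [QuotientGroup.mk_mul, hbt]
        simp
      simp [ψ, LinearMap.funLeft_apply, this, hev]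
    rw [LinearMap.finrank_range_dualMap_eq_finrank_range] at h2
    exact h2.trans (Submodule.finrank_mono h1)
  have hcount : ∑ q : A ⧸ H, (s q).card = Fintype.card κ * B.card := by
    have h1 : ∀ t : κ, (Finset.univ.filter fun q : A ⧸ H =>
        (QuotientGroup.mk (c t).1 : A ⧸ H) * q⁻¹ ∈ Bq).card = B.card := by
      intro t
      rw [← hBq]
      refine Finset.card_bij (fun q _ => (QuotientGroup.mk (c t).1 : A ⧸ H) * q⁻¹) ?_ ?_ ?_
      · intro q hq; exact (Finset.mem_filter.1 hq).2
      · intro q _ q' _ h; simpa using h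
      · intro b hb
        refine ⟨b⁻¹ * (QuotientGroup.mk (c t).1 : A ⧸ H), ?_, ?_⟩
        · simpa using hb
        · simp
    simp only [s, Finset.card_filter]
    rw [Finset.sum_comm]
    simp only [← Finset.card_filter, h1]
    simp
  calc B.card * Module.finrank (ZMod 2) K ≤ Fintype.card κ * B.card := by
        rw [mul_comm]; exact Nat.mul_le_mul_right _ hcard
    _ = ∑ q : A ⧸ H, (s q).card := hcount.symm
    _ ≤ ∑ q : A ⧸ H, Module.finrank (ZMod 2) (resSpace K B) := Finset.sum_le_sum fun q _ => hs q
    _ = _ := by simp [Subgroup.index_eq_card]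

/-- Locality of continuous equivariant maps. -/
theorem locality {a b : ℕ}
    (d : (A → Fin a → ZMod 2) →ₗ[ZMod 2] (A → Fin b → ZMod 2)) (hc : Continuous d)
    (he : ∀ γ f, d (ltv _ γ f) = ltv _ γ (d f)) :
    ∃ E : Finset A, ∀ f g, (∀ e ∈ E, f (e * g) = 0) → d f g = 0 := by
  have hopen : IsOpen {f : A → Fin a → ZMod 2 | d f 1 = 0} := by
    have : Continuous fun f => d f 1 := (continuous_apply 1).comp hc
    exact (isOpen_discrete ({0} : Set (Fin b → ZMod 2))).preimage this
  obtain ⟨I, u, hu, hsub⟩ := isOpen_pi_iff.1 hopen 0 (by simp)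
  refine ⟨I, fun f g hf => ?_⟩
  have h1 : ltv _ g⁻¹ f ∈ {f : A → Fin a → ZMod 2 | d f 1 = 0} := by
    apply hsub
    intro e he'
    have : ltv _ g⁻¹ f e = 0 := by
      simp only [ltv, inv_inv]
      rw [mul_comm]; exact hf e he'
    rw [this]
    exact (hu e he').2
  simp only [Set.mem_setOf_eq, he, ltv] at h1
  simpa using h1

theorem subset_pow {S : Finset A} (hS : SymmGen S) (E : Finset A) : ∃ r : ℕ, E ⊆ S ^ r := by
  obtain ⟨h1, hinv, hgen⟩ := hS
  have hmono : Monotone fun r : ℕ => S ^ r := Finset.pow_right_monotone h1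
  have hx : ∀ x : A, ∃ r : ℕ, x ∈ S ^ r := by
    intro x
    have hx : x ∈ Subgroup.closure (S : Set A) := by rw [hgen]; trivial
    induction hx using Subgroup.closure_induction with
    | mem x hx => exact ⟨1, by simpa using hx⟩
    | one => exact ⟨0, by simp⟩
    | mul x y _ _ hx hy =>
      obtain ⟨r, hr⟩ := hx
      obtain ⟨t, ht⟩ := hy
      exact ⟨r + t, by rw [pow_add]; exact Finset.mul_mem_mul hr ht⟩
    | inv x _ hx =>
      obtain ⟨r, hr⟩ := hx
      refine ⟨r, ?_⟩
      have hSi : S⁻¹ = S := by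
        ext y
        rw [Finset.mem_inv']
        exact ⟨fun h => by simpa using hinv _ h, hinv y⟩
      rw [← hSi, inv_pow, Finset.mem_inv']
      simpa using hr
  induction E using Finset.induction_on with
  | empty => exact ⟨0, by simp⟩
  | insert x E _ ih =>
    obtain ⟨r, hr⟩ := ih
    obtain ⟨t, ht⟩ := hx x
    refine ⟨max r t, Finset.insert_subset (hmono (le_max_right r t) ht)
      (hr.trans (hmono (le_max_left r t)))⟩

/-- Rank estimate for kernel and image on finite windows. -/
theorem window {a b : ℕ}
    (d : (A → Fin a → ZMod 2) →ₗ[ZMod 2] (A → Fin b → ZMod 2)) (E B B' : Finset A)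
    (hE : ∀ f g, (∀ e ∈ E, f (e * g) = 0) → d f g = 0)
    (hBB : B ⊆ B') (hEB : E * B ⊆ B') :
    Module.finrank (ZMod 2) (resSpace (LinearMap.ker d) B) +
      Module.finrank (ZMod 2) (resSpace (LinearMap.range d) B) ≤ a * B'.card := by
  classical
  let ext0 : (↥B' → Fin a → ZMod 2) →ₗ[ZMod 2] (A → Fin a → ZMod 2) :=
    { toFun := fun f x => if h : x ∈ B' then f ⟨x, h⟩ else 0
      map_add' := by intro f g; funext x; by_cases h : x ∈ B' <;> simp [h]
      map_smul' := by intro r f; funext x; by_cases h : x ∈ B' <;> simp [h] }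
  have hext : ∀ f x (h : x ∈ B'), ext0 f x = f ⟨x, h⟩ := by
    intro f x h; simp [ext0, h]
  let ρ := LinearMap.funLeft (ZMod 2) (Fin b → ZMod 2) (Subtype.val : ↥B → A)
  let ρ' := LinearMap.funLeft (ZMod 2) (Fin a → ZMod 2) (Subtype.val : ↥B' → A)
  let θ := ρ ∘ₗ d ∘ₗ ext0
  have key : ∀ f, θ (ρ' f) = ρ (d f) := by
    intro f
    funext x
    have : d (ext0 (ρ' f) - f) x.1 = 0 := by
      apply hE
      intro e he
      have hm : e * x.1 ∈ B' := hEB (Finset.mul_mem_mul he x.2)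
      simp [hext _ _ hm, ρ', LinearMap.funLeft_apply]
    rw [map_sub, Pi.sub_apply, sub_eq_zero] at this
    exact this
  have hr : resSpace (LinearMap.range d) B ≤ LinearMap.range θ := by
    rintro _ ⟨_, ⟨f, rfl⟩, rfl⟩
    exact ⟨ρ' f, key f⟩
  have hk1 : resSpace (LinearMap.ker d) B' ≤ LinearMap.ker θ := by
    rintro _ ⟨f, hf, rfl⟩
    have h := key f
    rw [LinearMap.mem_ker.1 hf, map_zero] at h
    exact h
  have hk2 : Module.finrank (ZMod 2) (resSpace (LinearMap.ker d) B) ≤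
      Module.finrank (ZMod 2) (resSpace (LinearMap.ker d) B') := by
    have : resSpace (LinearMap.ker d) B = (resSpace (LinearMap.ker d) B').map
        (LinearMap.funLeft (ZMod 2) (Fin a → ZMod 2) (fun x : ↥B => (⟨x.1, hBB x.2⟩ : ↥B'))) := by
      rw [resSpace, resSpace, ← Submodule.map_comp]
      rfl
    rw [this]
    exact Submodule.finrank_map_le _ _
  have h1 := Submodule.finrank_mono hr
  have h2 := Submodule.finrank_mono hk1
  have h3 := θ.finrank_range_add_finrank_ker
  have h4 : Module.finrank (ZMod 2) (↥B' → Fin a → ZMod 2) = a * B'.card := by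
    rw [Module.finrank_pi_fintype]; simp [mul_comm]
  omega

theorem eventually_injOn (Γi : ℕ → Subgroup A) (hdec : ∀ i, Γi (i + 1) ≤ Γi i)
    (hint : (⨅ i, Γi i) = ⊥) (B : Finset A) :
    ∀ᶠ i in atTop, Set.InjOn (QuotientGroup.mk : A → A ⧸ Γi i) B := by
  have hanti : Antitone Γi := antitone_nat_of_succ_le hdec
  have h1 : ∀ x ∈ B, ∀ y ∈ B, ∀ᶠ i in atTop, x⁻¹ * y ∈ Γi i → x = y := by
    intro x _ y _
    by_cases hxy : x = y
    · exact Eventually.of_forall fun _ _ => hxy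
    · have : x⁻¹ * y ∉ (⨅ i, Γi i) := by
        rw [hint, Subgroup.mem_bot, inv_mul_eq_one]
        exact hxy
      rw [Subgroup.mem_iInf, not_forall] at this
      obtain ⟨i, hi⟩ := this
      filter_upwards [eventually_ge_atTop i] with j hj hm
      exact absurd (hanti hj hm) hi
  have h2 : ∀ᶠ i in atTop, ∀ x ∈ B, ∀ y ∈ B, x⁻¹ * y ∈ Γi i → x = y := by
    rw [Filter.eventually_all_finset]
    intro x hx
    rw [Filter.eventually_all_finset]
    exact h1 x hx
  filter_upwards [h2] with i hi x hx y hy hxy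
  exact hi x hx y hy (QuotientGroup.eq.1 hxy)

theorem squeeze_limit (k u ε : ℕ → ℝ) (hε : Tendsto ε atTop (𝓝 0))
    (h1 : ∀ n, ∀ᶠ i in atTop, k i ≤ u n) (h2 : ∀ n, ∀ᶠ i in atTop, u n - ε n ≤ k i) :
    Tendsto k atTop (𝓝 (limsup u atTop)) := by
  have hC : CauchySeq k := by
    rw [Metric.cauchySeq_iff']
    intro e he
    obtain ⟨n, hn⟩ := (hε.eventually (gt_mem_nhds he)).exists
    obtain ⟨N, hN⟩ := eventually_atTop.1 ((h1 n).and (h2 n))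
    refine ⟨N, fun m hm => ?_⟩
    have ha := hN m hm
    have hb := hN N le_rfl
    rw [Real.dist_eq, abs_lt]
    constructor <;> linarith [ha.1, ha.2, hb.1, hb.2]
  obtain ⟨L, hL⟩ := cauchySeq_tendsto_of_complete hC
  have hu1 : ∀ n, L ≤ u n := fun n => le_of_tendsto hL (h1 n)
  have hu2 : ∀ n, u n ≤ L + ε n := fun n => by
    linarith [ge_of_tendsto hL (h2 n)]
  have hu : Tendsto u atTop (𝓝 L) := by
    refine tendsto_of_tendsto_of_tendsto_of_le_of_le tendsto_const_nhds ?_ hu1 hu2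
    simpa using tendsto_const_nhds.add hε
  rw [hu.limsup_eq]
  exact hL

theorem main_limits (S : Finset A) (F : ℕ → Finset A) (hS : SymmGen S) (hF : FolnerSeq S F)
    (Γi : ℕ → Subgroup A) (hdec : ∀ i, Γi (i + 1) ≤ Γi i)
    (hfin : ∀ i, (Γi i).index ≠ 0) (hint : (⨅ i, Γi i) = ⊥) {a b : ℕ}
    (d : (A → Fin a → ZMod 2) →ₗ[ZMod 2] (A → Fin b → ZMod 2)) (hc : Continuous d)
    (he : ∀ γ f, d (ltv _ γ f) = ltv _ γ (d f)) :
    Tendsto (fun i => (Module.finrank (ZMod 2)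
        ↥(LinearMap.ker d ⊓ fixSub (Fin a → ZMod 2) (Γi i)) : ℝ) / ((Γi i).index : ℝ))
      atTop (𝓝 (entropy F (LinearMap.ker d))) ∧
    Tendsto (fun i => (Module.finrank (ZMod 2)
        ↥(Submodule.map d (fixSub (Fin a → ZMod 2) (Γi i))) : ℝ) / ((Γi i).index : ℝ))
      atTop (𝓝 (entropy F (LinearMap.range d))) := by
  obtain ⟨E, hE⟩ := locality d hc he
  obtain ⟨r, hr⟩ := subset_pow hS E
  have h1r : (1 : A) ∈ S ^ r := Finset.one_mem_pow hS.1
  have hFpos : ∀ n, (0 : ℝ) < (F n).card := fun n => by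
    exact_mod_cast Finset.card_pos.2 ⟨1, hF.mono (Nat.zero_le n) hF.one_mem⟩
  have hipos : ∀ i, (0 : ℝ) < (Γi i).index := fun i => by
    exact_mod_cast Nat.pos_of_ne_zero (hfin i)
  have hfixinv : ∀ i (m : ℕ), InvariantSub _ (fixSub (Fin m → ZMod 2) (Γi i)) := by
    intro i m γ f hf
    rw [mem_fixSub_iff] at hf ⊢
    intro γ' hγ' δ
    simp only [ltv]
    rw [mul_left_comm]
    exact hf γ' hγ' _
  have hkerinv : ∀ i, InvariantSub _ (LinearMap.ker d ⊓ fixSub (Fin a → ZMod 2) (Γi i)) := by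
    rintro i γ f ⟨hf1, hf2⟩
    refine ⟨?_, hfixinv i a γ f hf2⟩
    have hf1' : d f = 0 := hf1
    change d _ = 0
    rw [he, hf1']
    rfl
  have hmapinv : ∀ i, InvariantSub _ (Submodule.map d (fixSub (Fin a → ZMod 2) (Γi i))) := by
    rintro i γ _ ⟨f, hf, rfl⟩
    exact ⟨_, hfixinv i a γ f hf, he γ f⟩
  have hmapfix : ∀ i, Submodule.map d (fixSub (Fin a → ZMod 2) (Γi i)) ≤ fixSub _ (Γi i) := by
    rintro i _ ⟨f, hf, rfl⟩
    rw [mem_fixSub_iff]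
    intro γ hγ δ
    have h0 : ltv _ γ f = f := by
      funext x
      exact (mem_fixSub_iff _ _).1 hf γ hγ x
    have h := congrFun (he γ f) δ
    rw [h0] at h
    exact h.symm
  have hsum : ∀ i, (Module.finrank (ZMod 2)
        ↥(LinearMap.ker d ⊓ fixSub (Fin a → ZMod 2) (Γi i)) : ℝ) / ((Γi i).index : ℝ) +
      (Module.finrank (ZMod 2)
        ↥(Submodule.map d (fixSub (Fin a → ZMod 2) (Γi i))) : ℝ) / ((Γi i).index : ℝ) = a := by
    intro i
    haveI := finite_fixSub a (Γi i) (hfin i)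
    have h1 := (d.domRestrict (fixSub (Fin a → ZMod 2) (Γi i))).finrank_range_add_finrank_ker
    rw [finrank_fixSub a _ (hfin i), LinearMap.range_domRestrict] at h1
    have h2 : Module.finrank (ZMod 2)
        (LinearMap.ker (d.domRestrict (fixSub (Fin a → ZMod 2) (Γi i)))) =
        Module.finrank (ZMod 2) ↥(LinearMap.ker d ⊓ fixSub (Fin a → ZMod 2) (Γi i)) := by
      rw [LinearMap.ker_domRestrict, inf_comm, ← Submodule.map_comap_subtype]
      exact (Submodule.finrank_map_subtype_eq _ _).symm
    rw [h2] at h1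
    rw [← add_div, div_eq_iff (hipos i).ne', add_comm]
    exact_mod_cast h1
  have hup : ∀ (m : ℕ) (W : Submodule (ZMod 2) (A → Fin m → ZMod 2))
      (K : ℕ → Submodule (ZMod 2) (A → Fin m → ZMod 2)) (_ : ∀ i, InvariantSub _ (K i))
      (_ : ∀ i, K i ≤ fixSub _ (Γi i)) (_ : ∀ i, K i ≤ W) (n : ℕ), ∀ᶠ i in atTop,
      (Module.finrank (ZMod 2) (K i) : ℝ) / ((Γi i).index : ℝ) ≤
      (Module.finrank (ZMod 2) ↥(resSpace W (F n)) : ℝ) / (F n).card := by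
    intro m W K hK1 hK2 hK3 n
    filter_upwards [eventually_injOn Γi hdec hint (F n)] with i hi
    have h1 := shearer m (Γi i) (hfin i) (K i) (hK1 i) (hK2 i) (F n) hi
    have h2 : Module.finrank (ZMod 2) (resSpace (K i) (F n)) ≤
        Module.finrank (ZMod 2) (resSpace W (F n)) :=
      Submodule.finrank_mono (Submodule.map_mono (hK3 i))
    have h3 := h1.trans (Nat.mul_le_mul_left _ h2)
    rw [div_le_div_iff₀ (hipos i) (hFpos n), mul_comm, mul_comm (Module.finrank (ZMod 2) ↥(resSpace W (F n)) : ℝ)]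
    exact_mod_cast h3
  have hupk := hup a (LinearMap.ker d) _ hkerinv (fun i => inf_le_right) (fun i => inf_le_left)
  have hupm := hup b (LinearMap.range d) _ hmapinv hmapfix (fun i => LinearMap.map_le_range)
  have hε : Tendsto (fun n => (a : ℝ) * ((((S ^ r * F n) \ F n).card : ℝ) / (F n).card))
      atTop (𝓝 0) := by
    simpa using (hF.folner r).const_mul (a : ℝ)
  have hw : ∀ n, (Module.finrank (ZMod 2) ↥(resSpace (LinearMap.ker d) (F n)) : ℝ) / (F n).card +
      (Module.finrank (ZMod 2) ↥(resSpace (LinearMap.range d) (F n)) : ℝ) / (F n).card ≤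
      a + (a : ℝ) * ((((S ^ r * F n) \ F n).card : ℝ) / (F n).card) := by
    intro n
    have hsub : F n ⊆ S ^ r * F n := Finset.subset_mul_right _ h1r
    have h1 := window d E (F n) (S ^ r * F n) hE hsub (Finset.mul_subset_mul_right hr)
    rw [← Finset.card_sdiff_add_card_eq_card hsub] at h1
    have h2 : (Module.finrank (ZMod 2) ↥(resSpace (LinearMap.ker d) (F n)) : ℝ) +
      (Module.finrank (ZMod 2) ↥(resSpace (LinearMap.range d) (F n)) : ℝ) ≤
      a * (((S ^ r * F n) \ F n).card + (F n).card) := by exact_mod_cast h1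
    rw [← add_div, div_le_iff₀ (hFpos n)]
    refine h2.trans (le_of_eq ?_)
    have := (hFpos n).ne'
    field_simp
    ring
  constructor
  · refine squeeze_limit _ _ _ hε hupk ?_
    intro n
    filter_upwards [hupm n] with i hi
    linarith [hsum i, hw n]
  · refine squeeze_limit _ _ _ hε hupm ?_
    intro n
    filter_upwards [hupk n] with i hi
    linarith [hsum i, hw n]

end Helpers

/-- Approximation of entropy Betti numbers by finite covers, for
`Γ = ℤ^d`. With `Γ ⊇ Γ₁ ⊇ Γ₂ ⊇ …` finite-index subgroups intersecting in `{0}` and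
`X_i = K̃/Γ_i`, one has `b_E^p(K) = lim_i dim_{𝔽₂} H^p(X_i,𝔽₂) / [Γ : Γ_i]`, where the
cochains of `X_i` are the `Γ_i`-fixed cochains of `K̃`, so that
`dim H^p(X_i) = dim(Z^p ∩ Fix Γ_i) − dim d_{p−1}(C^{p−1} ∩ Fix Γ_i)`. -/
theorem betti_approx_finite_covers (dd : ℕ)
    (S : Finset (Multiplicative (Fin dd → ℤ)))
    (F : ℕ → Finset (Multiplicative (Fin dd → ℤ)))
    (hS : SymmGen S) (hF : FolnerSeq S F)
    (Γi : ℕ → Subgroup (Multiplicative (Fin dd → ℤ)))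
    (hdec : ∀ i, Γi (i + 1) ≤ Γi i)
    (hfin : ∀ i, (Γi i).index ≠ 0)
    (hint : (⨅ i, Γi i) = ⊥)
    (n : ℕ) (k : ℕ → ℕ) (hk : ∀ p, n < p → k p = 0)
    (d : ∀ p : ℕ, ((Multiplicative (Fin dd → ℤ)) → Fin (k p) → ZMod 2) →ₗ[ZMod 2]
      ((Multiplicative (Fin dd → ℤ)) → Fin (k (p + 1)) → ZMod 2))
    (hdcont : ∀ p, Continuous (d p))
    (hdequi : ∀ p, ∀ γ, ∀ f, d p (ltv _ γ f) = ltv _ γ (d p f))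
    (hdd : ∀ p, ∀ f, d (p + 1) (d p f) = 0)
    (p : ℕ) :
    Tendsto
      (fun i =>
        ((Module.finrank (ZMod 2)
            ↥(LinearMap.ker (d p) ⊓ fixSub (Fin (k p) → ZMod 2) (Γi i)) : ℝ) -
          (match p with
           | 0 => (0 : ℝ)
           | q + 1 => (Module.finrank (ZMod 2)
              ↥(Submodule.map (d q) (fixSub (Fin (k q) → ZMod 2) (Γi i))) : ℝ))) /
          ((Γi i).index : ℝ))
      atTop (𝓝 (bE F k d p)) := by
  have H := fun q => main_limits S F hS hF Γi hdec hfin hint (d q) (hdcont q) (hdequi q)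
  cases p with
  | zero =>
    simpa only [bE, sub_zero] using (H 0).1
  | succ q =>
    simp only [bE, sub_div]
    exact (H (q + 1)).1.sub (H q).2
end

section
/- For any finitely generated amenable group Γ, the class [𝔽₂[Γ]] of the free module of rank one generates an infinite cyclic subgroup of the Grothendieck group G(𝔽₂[Γ]) of finitely generated left 𝔽₂[Γ]-modules. -/
open Filter Topology Pointwise

variable {G : Type*} [Group G] [DecidableEq G]

/-- Presentations of finitely generated left `R`-modules: a number of generators `n`
together with a submodule of relations in `R^n`. Every finitely generated left
`R`-module is isomorphic to `ModOf R q` for some presentation `q`. -/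
def Pres (R : Type*) [Ring R] := Σ n : ℕ, Submodule R (Fin n → R)

/-- The finitely generated module presented by `q`. -/
def ModOf (R : Type*) [Ring R] (q : Pres R) := (Fin q.1 → R) ⧸ q.2

noncomputable instance (R : Type*) [Ring R] (q : Pres R) : AddCommGroup (ModOf R q) :=
  inferInstanceAs (AddCommGroup ((Fin q.1 → R) ⧸ q.2))

noncomputable instance (R : Type*) [Ring R] (q : Pres R) : Module R (ModOf R q) :=
  inferInstanceAs (Module R ((Fin q.1 → R) ⧸ q.2))

/-- The relators `[M] + [N] − [L]` coming from short exact sequences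
`0 → M → L → N → 0` of finitely generated left `R`-modules. -/
def relSet (R : Type*) [Ring R] : Set (FreeAbelianGroup (Pres R)) :=
  {x | ∃ a b c : Pres R, ∃ f : ModOf R a →ₗ[R] ModOf R c,
    ∃ g : ModOf R c →ₗ[R] ModOf R b,
    Function.Injective f ∧ Function.Surjective g ∧
    LinearMap.range f = LinearMap.ker g ∧
    x = FreeAbelianGroup.of a + FreeAbelianGroup.of b - FreeAbelianGroup.of c}

/-- The Grothendieck group `G(R)` of finitely generated left `R`-modules. -/
def GGroup (R : Type*) [Ring R] :=
  FreeAbelianGroup (Pres R) ⧸ AddSubgroup.closure (relSet R)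

noncomputable instance (R : Type*) [Ring R] : AddCommGroup (GGroup R) :=
  inferInstanceAs (AddCommGroup
    (FreeAbelianGroup (Pres R) ⧸ AddSubgroup.closure (relSet R)))

/-- The class `[R] ∈ G(R)` of the free module of rank one (presented by one generator
and no relations). -/
def clsR (R : Type*) [Ring R] : GGroup R :=
  QuotientAddGroup.mk (FreeAbelianGroup.of ⟨1, ⊥⟩)


set_option linter.unusedSectionVars false

section RankTheory

variable {V W X : Type*} [AddCommGroup V] [Module (ZMod 2) V]
  [AddCommGroup W] [Module (ZMod 2) W] [AddCommGroup X] [Module (ZMod 2) X]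

/-- Linear span of the translates of `E` by elements of `A`. -/
def sp (ρ : Representation (ZMod 2) G V) (A : Finset G) (E : Set V) :
    Submodule (ZMod 2) V :=
  Submodule.span (ZMod 2) (Set.image2 (fun a e => ρ a e) (A : Set G) E)

lemma mem_sp (ρ : Representation (ZMod 2) G V) {A : Finset G} {E : Set V} {a : G} {e : V}
    (ha : a ∈ A) (he : e ∈ E) : ρ a e ∈ sp ρ A E :=
  Submodule.subset_span ⟨a, ha, e, he, rfl⟩

lemma sp_le (ρ : Representation (ZMod 2) G V) {A : Finset G} {E : Set V}
    {U : Submodule (ZMod 2) V} (h : ∀ a ∈ A, ∀ e ∈ E, ρ a e ∈ U) : sp ρ A E ≤ U := by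
  refine Submodule.span_le.2 ?_
  rintro _ ⟨a, ha, e, he, rfl⟩
  exact h a ha e he

lemma sp_mono (ρ : Representation (ZMod 2) G V) {A B : Finset G} {E E' : Set V}
    (h : A ⊆ B) (h' : E ⊆ E') : sp ρ A E ≤ sp ρ B E' :=
  sp_le ρ fun _ ha _ he => mem_sp ρ (h ha) (h' he)

lemma sp_union (ρ : Representation (ZMod 2) G V) (A B : Finset G) (E : Set V) :
    sp ρ (A ∪ B) E = sp ρ A E ⊔ sp ρ B E := by
  unfold sp
  rw [← Submodule.span_union, ← Set.image2_union_left, Finset.coe_union]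

lemma sp_fd (ρ : Representation (ZMod 2) G V) (A : Finset G) {E : Set V} (hE : E.Finite) :
    FiniteDimensional (ZMod 2) (sp ρ A E) :=
  FiniteDimensional.span_of_finite _ (A.finite_toSet.image2 _ hE)

lemma sp_finrank_le (ρ : Representation (ZMod 2) G V) (A : Finset G) {E : Set V}
    (hE : E.Finite) : Module.finrank (ZMod 2) (sp ρ A E) ≤ A.card * E.ncard := by
  classical
  have h : Set.image2 (fun a e => ρ a e) (A : Set G) E
      = ((Finset.image₂ (fun a e => ρ a e) A hE.toFinset : Finset V) : Set V) := by
    simp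
  unfold sp
  rw [h]
  refine (finrank_span_finset_le_card _).trans ((Finset.card_image₂_le _ _ _).trans ?_)
  rw [Set.ncard_eq_toFinset_card E hE]

/-- `f` intertwines the actions: image of the span. -/
lemma sp_map (ρ : Representation (ZMod 2) G V) (σ : Representation (ZMod 2) G W)
    (f : V →ₗ[ZMod 2] W) (hf : ∀ g x, f (ρ g x) = σ g (f x)) (A : Finset G) (E : Set V) :
    (sp ρ A E).map f = sp σ A (f '' E) := by
  unfold sp
  rw [Submodule.map_span]
  congr 1
  ext y
  constructor
  · rintro ⟨_, ⟨a, ha, e, he, rfl⟩, rfl⟩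
    exact ⟨a, ha, f e, ⟨e, he, rfl⟩, (hf a e).symm⟩
  · rintro ⟨a, ha, _, ⟨e, he, rfl⟩, rfl⟩
    exact ⟨_, ⟨a, ha, e, he, rfl⟩, hf a e⟩

lemma sp_translate (ρ : Representation (ZMod 2) G V) (g : G) (A : Finset G) (E : Set V) :
    (sp ρ A E).map (ρ g) = sp ρ (g • A) E := by
  unfold sp
  rw [Submodule.map_span]
  congr 1
  ext y
  constructor
  · rintro ⟨_, ⟨a, ha, e, he, rfl⟩, rfl⟩
    exact ⟨g * a, Finset.mem_coe.2 (Finset.smul_mem_smul_finset ha), e, he, by simp⟩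
  · rintro ⟨a, ha, e, he, rfl⟩
    obtain ⟨b, hb, rfl⟩ := Finset.mem_smul_finset.1 ha
    exact ⟨_, ⟨b, hb, e, he, rfl⟩, by simp⟩

lemma rho_inj (ρ : Representation (ZMod 2) G V) (g : G) : Function.Injective (ρ g) := by
  intro x y h
  have := congrArg (ρ g⁻¹) h
  simpa using this

lemma finrank_map_inj (f : V →ₗ[ZMod 2] W) (hf : Function.Injective f)
    (U : Submodule (ZMod 2) V) :
    Module.finrank (ZMod 2) (U.map f) = Module.finrank (ZMod 2) U :=
  (LinearEquiv.finrank_eq (Submodule.equivMapOfInjective f hf U)).symm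

/-- rank-nullity on a subspace -/
lemma finrank_map_add (f : V →ₗ[ZMod 2] W) (U : Submodule (ZMod 2) V)
    [FiniteDimensional (ZMod 2) U] :
    Module.finrank (ZMod 2) (U.map f) + Module.finrank (ZMod 2) ↥(U ⊓ LinearMap.ker f)
      = Module.finrank (ZMod 2) U := by
  have h := LinearMap.finrank_range_add_finrank_ker (f.domRestrict U)
  have h1 : LinearMap.range (f.domRestrict U) = U.map f := by
    ext y; simp
  have h2 : (LinearMap.ker (f.domRestrict U)).map U.subtype = U ⊓ LinearMap.ker f := by
    ext y; simp [and_comm]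
  rw [← h, h1, ← h2, finrank_map_inj _ U.subtype_injective]

lemma sp_mul (ρ : Representation (ZMod 2) G V) {A K : Finset G} {E E' : Set V}
    (h : ∀ e ∈ E', e ∈ sp ρ K E) : sp ρ A E' ≤ sp ρ (A * K) E := by
  refine sp_le ρ fun a ha e he => ?_
  have h1 : ρ a e ∈ (sp ρ K E).map (ρ a) := Submodule.mem_map_of_mem (h e he)
  rw [sp_translate] at h1
  exact sp_mono ρ (Finset.smul_finset_subset_mul ha) subset_rfl h1

/-- `E` generates at least the set `U`. -/
lemma exists_common (ρ : Representation (ZMod 2) G V) {E E' : Set V} (hE' : E'.Finite)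
    (h : ∀ e ∈ E', ∃ K : Finset G, e ∈ sp ρ K E) :
    ∃ K : Finset G, ∀ e ∈ E', e ∈ sp ρ K E := by
  induction E', hE' using Set.Finite.induction_on with
  | empty => exact ⟨∅, by simp⟩
  | @insert a s _ _ ih =>
    obtain ⟨K, hK⟩ := ih fun e he => h e (Set.mem_insert_of_mem _ he)
    obtain ⟨K', hK'⟩ := h a (Set.mem_insert _ _)
    refine ⟨K ∪ K', fun e he => ?_⟩
    rcases Set.mem_insert_iff.1 he with rfl | he
    · exact sp_mono ρ Finset.subset_union_right subset_rfl hK'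
    · exact sp_mono ρ Finset.subset_union_left subset_rfl (hK e he)

/-- Shearer's inequality -/
lemma shearer_s18 {ι : Type*} (φ : Finset G → ℝ) (h0 : φ ∅ = 0)
    (hmono : ∀ A B, A ⊆ B → φ A ≤ φ B)
    (hsub : ∀ A B, φ (A ∪ B) + φ (A ∩ B) ≤ φ A + φ B)
    (T : Finset ι) (B : ι → Finset G) (c : ℕ) (Λ : Finset G)
    (hc : ∀ x ∈ Λ, c ≤ (T.filter fun t => x ∈ B t).card) :
    c * φ Λ ≤ ∑ t ∈ T, φ (B t ∩ Λ) := by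
  induction Λ using Finset.induction_on with
  | empty => simp [h0]
  | insert x Λ hx ih =>
    have ih := ih fun y hy => hc y (Finset.mem_insert_of_mem hy)
    have key : ∀ t ∈ T, φ (B t ∩ Λ) + (if x ∈ B t then (φ (insert x Λ) - φ Λ) else 0)
        ≤ φ (B t ∩ insert x Λ) := by
      intro t _
      split_ifs with h
      · have := hsub (B t ∩ insert x Λ) Λ
        have e1 : (B t ∩ insert x Λ) ∪ Λ = insert x Λ := by ext y; simp; grind
        have e2 : (B t ∩ insert x Λ) ∩ Λ = B t ∩ Λ := by ext y; simp; grind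
        rw [e1, e2] at this
        linarith
      · rw [add_zero]
        exact hmono _ _ (Finset.inter_subset_inter_left (Finset.subset_insert _ _))
    have h1 := Finset.sum_le_sum key
    rw [Finset.sum_add_distrib, ← Finset.sum_filter, Finset.sum_const, nsmul_eq_mul] at h1
    have h2 : (c : ℝ) ≤ ((T.filter fun t => x ∈ B t).card : ℝ) := by
      exact_mod_cast hc x (Finset.mem_insert_self _ _)
    have h3 : 0 ≤ φ (insert x Λ) - φ Λ := sub_nonneg.2 (hmono _ _ (Finset.subset_insert _ _))
    have := mul_le_mul_of_nonneg_right h2 h3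
    linarith

local notation "fr" => Module.finrank (ZMod 2)

lemma upper_bound (ρ : Representation (ZMod 2) G V) (σ : Representation (ZMod 2) G W)
    (p : V →ₗ[ZMod 2] W) (hp : ∀ g x, p (ρ g x) = σ g (p x))
    {E E1 : Set V} (hE : E.Finite) (hE1 : E1.Finite)
    (hker : ∀ x ∈ LinearMap.ker p, ∃ K : Finset G, x ∈ sp ρ K E1)
    (A : Finset G) :
    ∃ (K : Finset G) (C : ℝ), ∀ Λ : Finset G,
      (A.card : ℝ) * ((fr (sp ρ Λ E) : ℝ) - fr (sp ρ Λ E1)) ≤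
        Λ.card * (fr (sp σ A (p '' E)) : ℝ) + ((Λ * K) \ Λ).card * C := by
  have fdE : ∀ B, FiniteDimensional (ZMod 2) (sp ρ B E) := fun B => sp_fd ρ B hE
  have fdE1 : ∀ B, FiniteDimensional (ZMod 2) (sp ρ B E1) := fun B => sp_fd ρ B hE1
  obtain ⟨K0, hK0⟩ : ∃ K0 : Finset G, sp ρ A E ⊓ LinearMap.ker p ≤ sp ρ K0 E1 := by
    obtain ⟨s, hs⟩ : (sp ρ A E ⊓ LinearMap.ker p).FG :=
      (Submodule.fg_iff_finiteDimensional _).2 inferInstance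
    obtain ⟨K0, hK0⟩ := exists_common ρ (E := E1) s.finite_toSet (fun e he => hker e (by
      have : e ∈ sp ρ A E ⊓ LinearMap.ker p := hs ▸ Submodule.subset_span he
      exact this.2))
    exact ⟨K0, hs ▸ Submodule.span_le.2 hK0⟩
  set K : Finset G := insert 1 (K0 ∪ A⁻¹) with hK
  refine ⟨K, K.card * (A.card * E.ncard), fun Λ => ?_⟩
  set Q := sp ρ Λ E1 with hQ
  set ψ : Finset G → ℝ := fun B => (fr ↥(sp ρ B E ⊔ Q) : ℝ) - fr Q with hψ
  have hmono : ∀ A B, A ⊆ B → ψ A ≤ ψ B := by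
    intro A B h
    have : fr ↥(sp ρ A E ⊔ Q) ≤ fr ↥(sp ρ B E ⊔ Q) :=
      Submodule.finrank_mono (sup_le_sup_right (sp_mono ρ h subset_rfl) _)
    have : (fr ↥(sp ρ A E ⊔ Q) : ℝ) ≤ fr ↥(sp ρ B E ⊔ Q) := by exact_mod_cast this
    simp only [hψ]; linarith
  have h0 : ψ ∅ = 0 := by
    have : sp ρ ∅ E = ⊥ := by simp [sp]
    have e : sp ρ ∅ E ⊔ Q = Q := by rw [this, bot_sup_eq]
    simp only [hψ]
    rw [e, sub_self]
  have hsub : ∀ A B, ψ (A ∪ B) + ψ (A ∩ B) ≤ ψ A + ψ B := by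
    intro A B
    have h1 := Submodule.finrank_sup_add_finrank_inf_eq (sp ρ A E ⊔ Q) (sp ρ B E ⊔ Q)
    have h2 : sp ρ (A ∪ B) E ⊔ Q = (sp ρ A E ⊔ Q) ⊔ (sp ρ B E ⊔ Q) := by
      rw [sp_union, sup_sup_sup_comm, sup_idem]
    have h3 : fr ↥(sp ρ (A ∩ B) E ⊔ Q) ≤ fr ↥((sp ρ A E ⊔ Q) ⊓ (sp ρ B E ⊔ Q)) :=
      Submodule.finrank_mono (le_inf
        (sup_le_sup_right (sp_mono ρ Finset.inter_subset_left subset_rfl) _)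
        (sup_le_sup_right (sp_mono ρ Finset.inter_subset_right subset_rfl) _))
    rw [← h2] at h1
    have h1' : (fr ↥(sp ρ (A ∪ B) E ⊔ Q) : ℝ) + fr ↥((sp ρ A E ⊔ Q) ⊓ (sp ρ B E ⊔ Q))
      = fr ↥(sp ρ A E ⊔ Q) + fr ↥(sp ρ B E ⊔ Q) := by exact_mod_cast h1
    have h3' : (fr ↥(sp ρ (A ∩ B) E ⊔ Q) : ℝ) ≤ fr ↥((sp ρ A E ⊔ Q) ⊓ (sp ρ B E ⊔ Q)) := by
      exact_mod_cast h3
    simp only [hψ]; linarith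
  have hbd : ∀ B : Finset G, ψ B ≤ B.card * E.ncard := by
    intro B
    have h1 := Submodule.finrank_add_le_finrank_add_finrank (sp ρ B E) Q
    have h2 := sp_finrank_le ρ B hE
    have : (fr ↥(sp ρ B E ⊔ Q) : ℝ) ≤ B.card * E.ncard + fr Q := by
      exact_mod_cast h1.trans (Nat.add_le_add_right h2 _)
    simp only [hψ]; linarith
  have hgood : ∀ t : G, t • K0 ⊆ Λ → ψ (t • A) ≤ fr (sp σ A (p '' E)) := by
    intro t ht
    have h1 := Submodule.finrank_sup_add_finrank_inf_eq (sp ρ (t • A) E) Q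
    have h2 : fr (sp ρ (t • A) E) = fr (sp ρ A E) := by
      rw [← sp_translate, finrank_map_inj _ (rho_inj ρ t)]
    have h3 := finrank_map_add p (sp ρ A E)
    rw [sp_map ρ σ p hp] at h3
    have h4 : fr ↥(sp ρ A E ⊓ LinearMap.ker p) ≤ fr ↥(sp ρ (t • A) E ⊓ Q) := by
      rw [← finrank_map_inj _ (rho_inj ρ t)]
      refine Submodule.finrank_mono (le_inf ?_ ?_)
      · rw [← sp_translate]
        exact Submodule.map_mono inf_le_left
      · refine (Submodule.map_mono hK0).trans ?_
        rw [sp_translate]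
        exact sp_mono ρ ht subset_rfl
    have h5 : fr ↥(sp ρ (t • A) E ⊔ Q) ≤ fr (sp σ A (p '' E)) + fr Q := by omega
    have h5' : (fr ↥(sp ρ (t • A) E ⊔ Q) : ℝ) ≤ fr (sp σ A (p '' E)) + fr Q := by
      exact_mod_cast h5
    simp only [hψ]; linarith
  have hsh := shearer_s18 ψ h0 hmono hsub (Λ * A⁻¹) (fun t => t • A) A.card Λ (by
    intro x hx
    refine Finset.card_le_card_of_injOn (fun a => x * a⁻¹) ?_ ?_
    · intro a ha
      simp only [Finset.coe_filter, Set.mem_ofPred_eq]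
      refine ⟨Finset.mul_mem_mul hx (Finset.inv_mem_inv ha), ?_⟩
      exact Finset.mem_smul_finset.2 ⟨a, ha, by simp⟩
    · intro a _ b _ h
      simpa using h)
  have hQ' : (fr (sp ρ Λ E) : ℝ) - fr Q ≤ ψ Λ := by
    have : fr (sp ρ Λ E) ≤ fr ↥(sp ρ Λ E ⊔ Q) := Submodule.finrank_mono le_sup_left
    have : (fr (sp ρ Λ E) : ℝ) ≤ fr ↥(sp ρ Λ E ⊔ Q) := by exact_mod_cast this
    simp only [hψ]; linarith
  refine (mul_le_mul_of_nonneg_left hQ' (Nat.cast_nonneg _)).trans (hsh.trans ?_)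
  classical
  rw [← Finset.sum_filter_add_sum_filter_not _ (fun t => t ∈ Λ ∧ t • K0 ⊆ Λ)]
  refine add_le_add ?_ ?_
  · refine (Finset.sum_le_card_nsmul _ _ (fr (sp σ A (p '' E)) : ℝ) ?_).trans ?_
    · intro t ht
      exact (hmono _ _ Finset.inter_subset_left).trans (hgood t (Finset.mem_filter.1 ht).2.2)
    · rw [nsmul_eq_mul]
      refine mul_le_mul_of_nonneg_right ?_ (Nat.cast_nonneg _)
      exact Nat.cast_le.2 (Finset.card_le_card fun t ht => (Finset.mem_filter.1 ht).2.1)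
  · refine (Finset.sum_le_card_nsmul _ _ ((A.card : ℝ) * E.ncard) ?_).trans ?_
    · intro t ht
      refine (hmono _ _ Finset.inter_subset_left).trans ((hbd _).trans ?_)
      rw [Finset.card_smul_finset]
    · rw [nsmul_eq_mul, ← mul_assoc (((Λ * K) \ Λ).card : ℝ)]
      refine mul_le_mul_of_nonneg_right ?_ (by positivity)
      have : (Finset.filter (fun t => ¬ (t ∈ Λ ∧ t • K0 ⊆ Λ)) (Λ * A⁻¹)) ⊆
          ((Λ * K) \ Λ) * K⁻¹ := by
        intro t ht
        obtain ⟨ht1, ht2⟩ := Finset.mem_filter.1 ht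
        by_cases htΛ : t ∈ Λ
        · have : ¬ t • K0 ⊆ Λ := fun h => ht2 ⟨htΛ, h⟩
          obtain ⟨y, hy, hyΛ⟩ := Finset.not_subset.1 this
          obtain ⟨k, hk, rfl⟩ := Finset.mem_smul_finset.1 hy
          have hkK : k ∈ K := by simp [hK, hk]
          refine Finset.mem_mul.2 ⟨t * k, ?_, k⁻¹, Finset.inv_mem_inv hkK, by simp⟩
          exact Finset.mem_sdiff.2 ⟨Finset.mul_mem_mul htΛ hkK, hyΛ⟩
        · refine Finset.mem_mul.2 ⟨t, ?_, 1, by simp [hK], by simp⟩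
          refine Finset.mem_sdiff.2 ⟨Finset.mul_subset_mul_left ?_ ht1, htΛ⟩
          intro x hx
          simp only [hK, Finset.mem_insert, Finset.mem_union]
          exact Or.inr (Or.inr hx)
      have h2 := (Finset.card_le_card this).trans Finset.card_mul_le
      rw [Finset.card_inv] at h2
      exact_mod_cast h2

lemma lower_bound (ρ : Representation (ZMod 2) G V) (σ : Representation (ZMod 2) G W)
    (p : V →ₗ[ZMod 2] W) (hp : ∀ g x, p (ρ g x) = σ g (p x))
    {E E1 : Set V} (hE : E.Finite) (h1 : E1 ⊆ E)
    (h1' : ∀ g, ∀ e ∈ E1, p (ρ g e) = 0) (Λ : Finset G) :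
    (fr (sp ρ Λ E1) : ℝ) + fr (sp σ Λ (p '' E)) ≤ fr (sp ρ Λ E) := by
  have := sp_fd ρ Λ hE
  have h3 := finrank_map_add p (sp ρ Λ E)
  rw [sp_map ρ σ p hp] at h3
  have h4 : fr (sp ρ Λ E1) ≤ fr ↥(sp ρ Λ E ⊓ LinearMap.ker p) :=
    Submodule.finrank_mono (le_inf (sp_mono ρ subset_rfl h1)
      (sp_le ρ fun a _ e he => h1' a e he))
  have : fr (sp ρ Λ E1) + fr (sp σ Λ (p '' E)) ≤ fr (sp ρ Λ E) := by omega
  exact_mod_cast this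

lemma change_bound (ρ : Representation (ZMod 2) G V) {E E' : Set V} (hE : E.Finite)
    (hE' : E'.Finite) (h : ∀ e ∈ E', ∃ K : Finset G, e ∈ sp ρ K E) :
    ∃ (K : Finset G) (C : ℝ), ∀ Λ : Finset G,
      (fr (sp ρ Λ E') : ℝ) ≤ fr (sp ρ Λ E) + ((Λ * K) \ Λ).card * C := by
  obtain ⟨K, hK⟩ := exists_common ρ hE' h
  refine ⟨K, E.ncard, fun Λ => ?_⟩
  have fdE : ∀ B, FiniteDimensional (ZMod 2) (sp ρ B E) := fun B => sp_fd ρ B hE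
  have h1 : sp ρ Λ E' ≤ sp ρ Λ E ⊔ sp ρ ((Λ * K) \ Λ) E := by
    rw [← sp_union]
    refine (sp_mul ρ hK).trans (sp_mono ρ ?_ subset_rfl)
    intro x hx
    by_cases h : x ∈ Λ <;> simp [h, hx]
  have h2 := Submodule.finrank_mono h1
  have h3 := Submodule.finrank_add_le_finrank_add_finrank (sp ρ Λ E) (sp ρ ((Λ * K) \ Λ) E)
  have h4 := sp_finrank_le ρ ((Λ * K) \ Λ) hE
  exact_mod_cast h2.trans (h3.trans (Nat.add_le_add_left h4 _))

/-- every finite set lies in a ball -/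
lemma exists_pow {S : Finset G} (hS : SymmGen S) (K : Finset G) : ∃ r : ℕ, K ⊆ S ^ r := by
  obtain ⟨h1, hinv, hgen⟩ := hS
  have hg : ∀ g : G, ∃ r : ℕ, g ∈ S ^ r := by
    intro g
    have hg : g ∈ Subgroup.closure (S : Set G) := hgen ▸ Subgroup.mem_top g
    induction hg using Subgroup.closure_induction'' with
    | one => exact ⟨0, by simp⟩
    | mem x hx => exact ⟨1, by simpa using hx⟩
    | inv_mem x hx => exact ⟨1, by simpa using hinv x hx⟩
    | mul x y _ _ hx hy =>
      obtain ⟨a, ha⟩ := hx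
      obtain ⟨b, hb⟩ := hy
      exact ⟨a + b, by rw [pow_add]; exact Finset.mul_mem_mul ha hb⟩
  choose r hr using hg
  refine ⟨K.sup r, fun k hk => ?_⟩
  exact Finset.pow_subset_pow_right h1 (Finset.le_sup hk) (hr k)

lemma folner_right {S : Finset G} {F : ℕ → Finset G} (hS : SymmGen S) (hF : FolnerSeq S F)
    (K : Finset G) :
    Tendsto (fun n => ((((F n)⁻¹ * K) \ (F n)⁻¹).card : ℝ) / ((F n)⁻¹).card)
      (hyperfilter ℕ : Filter ℕ) (𝓝 0) := by
  obtain ⟨r, hr⟩ := exists_pow hS K⁻¹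
  refine squeeze_zero (fun n => by positivity) (fun n => ?_)
    ((hF.folner r).mono_left Nat.hyperfilter_le_atTop)
  rw [Finset.card_inv]
  refine div_le_div_of_nonneg_right ?_ (Nat.cast_nonneg _)
  refine Nat.cast_le.2 ?_
  rw [← Finset.card_inv (((F n)⁻¹ * K) \ (F n)⁻¹)]
  refine Finset.card_le_card ?_
  intro x hx
  rw [Finset.mem_inv', Finset.mem_sdiff] at hx
  obtain ⟨hx1, hx2⟩ := hx
  rw [← Finset.mem_inv', mul_inv_rev, inv_inv] at hx1
  rw [← Finset.mem_inv', inv_inv] at hx2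
  exact Finset.mem_sdiff.2 ⟨Finset.mul_subset_mul_right hr hx1, hx2⟩

/-- normalized dimension -/
noncomputable def dens (F : ℕ → Finset G) (ρ : Representation (ZMod 2) G V) (E : Set V)
    (n : ℕ) : ℝ := (fr (sp ρ (F n)⁻¹ E) : ℝ) / ((F n)⁻¹).card

/-- rank along a nonprincipal ultrafilter -/
noncomputable def rkU (F : ℕ → Finset G) (ρ : Representation (ZMod 2) G V) (E : Set V) : ℝ :=
  limUnder (hyperfilter ℕ : Filter ℕ) (dens F ρ E)

lemma tendsto_rkU (F : ℕ → Finset G) (hF : ∀ n, (F n).Nonempty)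
    (ρ : Representation (ZMod 2) G V) {E : Set V} (hE : E.Finite) :
    Tendsto (dens F ρ E) (hyperfilter ℕ : Filter ℕ) (𝓝 (rkU F ρ E)) := by
  refine tendsto_nhds_limUnder ?_
  have hb : ∀ n, dens F ρ E n ∈ Set.Icc (0 : ℝ) E.ncard := by
    intro n
    refine ⟨by unfold dens; positivity, ?_⟩
    have hpos : (0 : ℝ) < ((F n)⁻¹).card := by
      rw [Finset.card_inv]
      exact_mod_cast (hF n).card_pos
    unfold dens
    rw [div_le_iff₀ hpos, mul_comm]
    exact_mod_cast sp_finrank_le ρ (F n)⁻¹ hE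
  obtain ⟨x, _, hx⟩ := (isCompact_Icc (a := (0 : ℝ)) (b := E.ncard)).ultrafilter_le_nhds
    ((hyperfilter ℕ).map (dens F ρ E)) (by
      rw [Filter.le_principal_iff]
      exact Filter.mem_map.2 (Filter.Eventually.of_forall hb))
  exact ⟨x, hx⟩

variable {S : Finset G} {F : ℕ → Finset G}

lemma folner_nonempty (hF : FolnerSeq S F) (n : ℕ) : (F n).Nonempty :=
  ⟨1, hF.mono (Nat.zero_le n) hF.one_mem⟩

lemma folner_card_pos (hF : FolnerSeq S F) (n : ℕ) : (0 : ℝ) < ((F n)⁻¹).card := by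
  rw [Finset.card_inv]
  exact_mod_cast (folner_nonempty hF n).card_pos

lemma rkU_le (hS : SymmGen S) (hF : FolnerSeq S F) (ρ : Representation (ZMod 2) G V)
    {E E' : Set V} (hE : E.Finite)
    (hE' : E'.Finite) (h : ∀ e ∈ E', ∃ K : Finset G, e ∈ sp ρ K E) :
    rkU F ρ E' ≤ rkU F ρ E := by
  obtain ⟨K, C, hKC⟩ := change_bound ρ hE hE' h
  have t1 := tendsto_rkU F (folner_nonempty hF) ρ hE'
  have t2 := (tendsto_rkU F (folner_nonempty hF) ρ hE).add
    ((folner_right hS hF K).mul_const C)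
  rw [zero_mul, add_zero] at t2
  refine le_of_tendsto_of_tendsto' t1 t2 fun n => ?_
  have hpos := folner_card_pos hF n
  unfold dens
  rw [div_mul_eq_mul_div, ← add_div]
  exact div_le_div_of_nonneg_right (hKC _) hpos.le

lemma rkU_upper (hS : SymmGen S) (hF : FolnerSeq S F)
    (ρ : Representation (ZMod 2) G V) (σ : Representation (ZMod 2) G W)
    (p : V →ₗ[ZMod 2] W) (hp : ∀ g x, p (ρ g x) = σ g (p x))
    {E E1 : Set V} (hE : E.Finite) (hE1 : E1.Finite)
    (hker : ∀ x ∈ LinearMap.ker p, ∃ K : Finset G, x ∈ sp ρ K E1) :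
    rkU F ρ E ≤ rkU F ρ E1 + rkU F σ (p '' E) := by
  have key : ∀ A : Finset G,
      (A.card : ℝ) * (rkU F ρ E - rkU F ρ E1) ≤ fr (sp σ A (p '' E)) := by
    intro A
    obtain ⟨K, C, hKC⟩ := upper_bound ρ σ p hp hE hE1 hker A
    have t1 := ((tendsto_rkU F (folner_nonempty hF) ρ hE).sub
      (tendsto_rkU F (folner_nonempty hF) ρ hE1)).const_mul (A.card : ℝ)
    have t2 := ((folner_right hS hF K).mul_const C).const_add (fr (sp σ A (p '' E)) : ℝ)
    rw [zero_mul, add_zero] at t2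
    refine le_of_tendsto_of_tendsto' t1 t2 fun n => ?_
    have hpos := folner_card_pos hF n
    have := hKC (F n)⁻¹
    unfold dens
    rw [← sub_div, ← mul_div_assoc, div_le_iff₀ hpos, add_mul, mul_right_comm,
      div_mul_cancel₀ _ hpos.ne']
    linarith
  have h2 : rkU F ρ E - rkU F ρ E1 ≤ rkU F σ (p '' E) := by
    refine ge_of_tendsto' (tendsto_rkU F (folner_nonempty hF) σ (hE.image p)) fun n => ?_
    have hpos := folner_card_pos hF n
    unfold dens
    rw [le_div_iff₀ hpos, mul_comm]
    exact key _
  linarith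

lemma rkU_lower (hF : FolnerSeq S F)
    (ρ : Representation (ZMod 2) G V) (σ : Representation (ZMod 2) G W)
    (p : V →ₗ[ZMod 2] W) (hp : ∀ g x, p (ρ g x) = σ g (p x))
    {E E1 : Set V} (hE : E.Finite) (h1 : E1 ⊆ E) (h1' : ∀ e ∈ E1, p e = 0) :
    rkU F ρ E1 + rkU F σ (p '' E) ≤ rkU F ρ E := by
  refine le_of_tendsto_of_tendsto'
    ((tendsto_rkU F (folner_nonempty hF) ρ (hE.subset h1)).add
      (tendsto_rkU F (folner_nonempty hF) σ (hE.image p)))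
    (tendsto_rkU F (folner_nonempty hF) ρ hE) fun n => ?_
  have hpos := folner_card_pos hF n
  unfold dens
  rw [← add_div]
  refine div_le_div_of_nonneg_right ?_ hpos.le
  exact lower_bound ρ σ p hp hE h1 (fun g e he => by rw [hp, h1' e he, map_zero]) _

/-- Additivity for exact sequences, with arbitrary finite generating sets. -/
lemma rkU_exact (hS : SymmGen S) (hF : FolnerSeq S F)
    (τ : Representation (ZMod 2) G X)
    (ρ : Representation (ZMod 2) G V) (σ : Representation (ZMod 2) G W)
    (i : X →ₗ[ZMod 2] V) (hi : ∀ g x, i (τ g x) = ρ g (i x))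
    (p : V →ₗ[ZMod 2] W) (hp : ∀ g x, p (ρ g x) = σ g (p x))
    (hinj : Function.Injective i) (hsurj : Function.Surjective p)
    (hex : LinearMap.range i = LinearMap.ker p)
    {Ea : Set X} {Ec : Set V} {Eb : Set W}
    (hEa : Ea.Finite) (hEb : Eb.Finite) (hEc : Ec.Finite)
    (ga : ∀ x, ∃ K : Finset G, x ∈ sp τ K Ea)
    (gb : ∀ x, ∃ K : Finset G, x ∈ sp σ K Eb)
    (gc : ∀ x, ∃ K : Finset G, x ∈ sp ρ K Ec) :
    rkU F τ Ea + rkU F σ Eb = rkU F ρ Ec := by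
  have ha : rkU F τ Ea = rkU F ρ (i '' Ea) := by
    unfold rkU
    congr 1
    funext n
    unfold dens
    rw [← sp_map τ ρ i hi, finrank_map_inj i hinj]
  have hker : ∀ x ∈ LinearMap.ker p, ∃ K : Finset G, x ∈ sp ρ K (i '' Ea) := by
    intro x hx
    rw [← hex] at hx
    obtain ⟨y, rfl⟩ := hx
    obtain ⟨K, hK⟩ := ga y
    exact ⟨K, sp_map τ ρ i hi K Ea ▸ Submodule.mem_map_of_mem hK⟩
  set E := i '' Ea ∪ Ec with hEdef
  have hE : E.Finite := (hEa.image i).union hEc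
  have gE : ∀ x, ∃ K : Finset G, x ∈ sp ρ K E := fun x => by
    obtain ⟨K, hK⟩ := gc x
    exact ⟨K, sp_mono ρ subset_rfl Set.subset_union_right hK⟩
  have hc : rkU F ρ Ec = rkU F ρ E :=
    le_antisymm (rkU_le hS hF ρ hE hEc fun e _ => gE e)
      (rkU_le hS hF ρ hEc hE fun e _ => gc e)
  have hb : rkU F σ Eb = rkU F σ (p '' E) := by
    refine le_antisymm (rkU_le hS hF σ (hE.image p) hEb fun e _ => ?_)
      (rkU_le hS hF σ hEb (hE.image p) fun e _ => gb e)
    obtain ⟨y, rfl⟩ := hsurj e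
    obtain ⟨K, hK⟩ := gE y
    exact ⟨K, sp_map ρ σ p hp K E ▸ Submodule.mem_map_of_mem hK⟩
  rw [ha, hb, hc]
  refine le_antisymm ?_ (rkU_upper hS hF ρ σ p hp hE (hEa.image i) hker)
  refine rkU_lower hF ρ σ p hp hE Set.subset_union_left ?_
  rintro _ ⟨x, _, rfl⟩
  have : i x ∈ LinearMap.ker p := hex ▸ LinearMap.mem_range_self i x
  exact this

end RankTheory

section ModRank

noncomputable instance modK (q : Pres (MonoidAlgebra (ZMod 2) G)) :
    Module (ZMod 2) (ModOf (MonoidAlgebra (ZMod 2) G) q) :=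
  Module.compHom _ (algebraMap (ZMod 2) (MonoidAlgebra (ZMod 2) G))

lemma modK_smul (q : Pres (MonoidAlgebra (ZMod 2) G)) (c : ZMod 2)
    (x : ModOf (MonoidAlgebra (ZMod 2) G) q) :
    c • x = (algebraMap (ZMod 2) (MonoidAlgebra (ZMod 2) G) c) • x := rfl

/-- The action of `G` on a presented module. -/
noncomputable def rho (q : Pres (MonoidAlgebra (ZMod 2) G)) :
    Representation (ZMod 2) G (ModOf (MonoidAlgebra (ZMod 2) G) q) where
  toFun g := AddMonoidHom.toZModLinearMap 2
    (DistribSMul.toAddMonoidHom (ModOf (MonoidAlgebra (ZMod 2) G) q)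
      (MonoidAlgebra.of (ZMod 2) G g))
  map_one' := by
    ext x
    change (MonoidAlgebra.of (ZMod 2) G 1) • x = x
    rw [map_one, one_smul]
  map_mul' a b := by
    ext x
    change (MonoidAlgebra.of (ZMod 2) G (a * b)) • x =
      (MonoidAlgebra.of (ZMod 2) G a) • (MonoidAlgebra.of (ZMod 2) G b) • x
    rw [map_mul, mul_smul]

lemma rho_apply (q : Pres (MonoidAlgebra (ZMod 2) G)) (g : G)
    (x : ModOf (MonoidAlgebra (ZMod 2) G) q) :
    rho q g x = (MonoidAlgebra.of (ZMod 2) G g) • x := rfl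

/-- The projection from the free module. -/
noncomputable def prj (q : Pres (MonoidAlgebra (ZMod 2) G)) :
    (Fin q.1 → MonoidAlgebra (ZMod 2) G) →ₗ[MonoidAlgebra (ZMod 2) G]
      ModOf (MonoidAlgebra (ZMod 2) G) q := q.2.mkQ

/-- The canonical generators. -/
noncomputable def gens (q : Pres (MonoidAlgebra (ZMod 2) G)) :
    Set (ModOf (MonoidAlgebra (ZMod 2) G) q) :=
  Set.range fun i : Fin q.1 => prj q (Pi.single i 1)

lemma gens_finite (q : Pres (MonoidAlgebra (ZMod 2) G)) : (gens q).Finite :=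
  Set.finite_range _

lemma smul_mem_sp (q : Pres (MonoidAlgebra (ZMod 2) G)) (r : MonoidAlgebra (ZMod 2) G)
    {e : ModOf (MonoidAlgebra (ZMod 2) G) q} (he : e ∈ gens q) :
    ∃ K : Finset G, r • e ∈ sp (rho q) K (gens q) := by
  induction r using MonoidAlgebra.induction_on with
  | of g => exact ⟨{g}, mem_sp (rho q) (Finset.mem_singleton_self g) he⟩
  | add a b ha hb =>
    obtain ⟨K, hK⟩ := ha
    obtain ⟨K', hK'⟩ := hb
    refine ⟨K ∪ K', ?_⟩
    rw [add_smul]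
    exact add_mem (sp_mono _ Finset.subset_union_left subset_rfl hK)
      (sp_mono _ Finset.subset_union_right subset_rfl hK')
  | smul c a ha =>
    obtain ⟨K, hK⟩ := ha
    refine ⟨K, ?_⟩
    rw [Algebra.smul_def, mul_smul, ← modK_smul]
    exact Submodule.smul_mem _ _ hK

lemma gens_gen (q : Pres (MonoidAlgebra (ZMod 2) G))
    (x : ModOf (MonoidAlgebra (ZMod 2) G) q) :
    ∃ K : Finset G, x ∈ sp (rho q) K (gens q) := by
  obtain ⟨v, rfl⟩ : ∃ v, prj q v = x := q.2.mkQ_surjective x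
  have hv : prj q v = ∑ i, v i • prj q (Pi.single i 1) := by
    conv_lhs => rw [pi_eq_sum_univ' v]
    rw [map_sum]
    refine Finset.sum_congr rfl fun i _ => ?_
    rw [← map_smul]
  choose K hK using fun i : Fin q.1 => smul_mem_sp q (v i) (e := prj q (Pi.single i 1)) ⟨i, rfl⟩
  refine ⟨Finset.univ.biUnion K, ?_⟩
  rw [hv]
  exact Submodule.sum_mem _ fun i _ => sp_mono _
    (Finset.subset_biUnion_of_mem K (Finset.mem_univ i)) subset_rfl (hK i)

/-- The rank of a presentation. -/
noncomputable def prk (F : ℕ → Finset G) (q : Pres (MonoidAlgebra (ZMod 2) G)) : ℝ :=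
  rkU F (rho q) (gens q)

lemma prk_exact {S : Finset G} {F : ℕ → Finset G} (hS : SymmGen S) (hF : FolnerSeq S F)
    (a b c : Pres (MonoidAlgebra (ZMod 2) G))
    (f : ModOf (MonoidAlgebra (ZMod 2) G) a →ₗ[MonoidAlgebra (ZMod 2) G]
      ModOf (MonoidAlgebra (ZMod 2) G) c)
    (g : ModOf (MonoidAlgebra (ZMod 2) G) c →ₗ[MonoidAlgebra (ZMod 2) G]
      ModOf (MonoidAlgebra (ZMod 2) G) b)
    (hf : Function.Injective f) (hg : Function.Surjective g)
    (hex : LinearMap.range f = LinearMap.ker g) :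
    prk F a + prk F b = prk F c := by
  refine rkU_exact hS hF (rho a) (rho c) (rho b)
    (AddMonoidHom.toZModLinearMap 2 f.toAddMonoidHom) (fun t x => ?_)
    (AddMonoidHom.toZModLinearMap 2 g.toAddMonoidHom) (fun t x => ?_) hf hg ?_
    (gens_finite a) (gens_finite b) (gens_finite c) (gens_gen a) (gens_gen b) (gens_gen c)
  · exact map_smul f _ x
  · exact map_smul g _ x
  · ext y
    exact SetLike.ext_iff.1 hex y

lemma prk_free {S : Finset G} {F : ℕ → Finset G} (hF : FolnerSeq S F) :
    prk F (⟨1, ⊥⟩ : Pres (MonoidAlgebra (ZMod 2) G)) = 1 := by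
  set q : Pres (MonoidAlgebra (ZMod 2) G) := ⟨1, ⊥⟩ with hq
  have hdens : ∀ n, dens F (rho q) (gens q) n = 1 := by
    intro n
    have hpos := folner_card_pos hF n
    unfold dens
    rw [div_eq_one_iff_eq hpos.ne']
    congr 1
    have hinj : Function.Injective (prj q) := by
      rw [← LinearMap.ker_eq_bot]
      exact Submodule.ker_mkQ _
    let e : ModOf (MonoidAlgebra (ZMod 2) G) q := prj q (Pi.single (0 : Fin 1) 1)
    have hli : LinearIndependent (ZMod 2) (fun a : ((F n)⁻¹ : Finset G) => rho q a e) := by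
      let L : MonoidAlgebra (ZMod 2) G →ₗ[ZMod 2] ModOf (MonoidAlgebra (ZMod 2) G) q :=
        AddMonoidHom.toZModLinearMap 2
          ((LinearMap.toSpanSingleton (MonoidAlgebra (ZMod 2) G) _ e).toAddMonoidHom)
      have hL : Function.Injective L := by
        intro x y hxy
        have h1 : x • e = y • e := hxy
        simp only [e, ← map_smul] at h1
        have h2 := congrFun (hinj h1) (0 : Fin 1)
        simpa using h2
      have hb : LinearIndependent (ZMod 2)
          (fun a : G => MonoidAlgebra.of (ZMod 2) G a) := by
        exact (MonoidAlgebra.basis G (ZMod 2)).linearIndependent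
      exact (hb.map' L (LinearMap.ker_eq_bot.2 hL)).comp _ Subtype.val_injective
    have hset : Set.image2 (fun a e => rho q a e) (((F n)⁻¹ : Finset G) : Set G) (gens q)
        = Set.range (fun a : ((F n)⁻¹ : Finset G) => rho q a e) := by
      ext y
      constructor
      · rintro ⟨a, ha, _, ⟨i, rfl⟩, rfl⟩
        refine ⟨⟨a, ha⟩, ?_⟩
        have : i = (0 : Fin 1) := Subsingleton.elim (α := Fin 1) _ _
        subst this
        rfl
      · rintro ⟨a, rfl⟩
        exact ⟨a, a.2, e, ⟨(0 : Fin 1), rfl⟩, rfl⟩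
    unfold sp
    rw [hset, finrank_span_eq_card hli]
    simp
  have h := tendsto_rkU F (folner_nonempty hF) (rho q) (gens_finite q)
  have h' : Tendsto (dens F (rho q) (gens q)) (hyperfilter ℕ : Filter ℕ) (𝓝 1) := by
    rw [show dens F (rho q) (gens q) = fun _ => 1 from funext hdens]
    exact tendsto_const_nhds
  exact tendsto_nhds_unique h h'

end ModRank

/-- For any finitely generated amenable group `Γ`, the class `[𝔽₂[Γ]]` of
the free module of rank one generates an infinite cyclic subgroup of the Grothendieck
group `G(𝔽₂[Γ])` of finitely generated left `𝔽₂[Γ]`-modules. -/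
theorem grothendieck_infinite_cyclic
    (S : Finset G) (F : ℕ → Finset G) (hS : SymmGen S) (hF : FolnerSeq S F) :
    ∀ z : ℤ, z ≠ 0 → z • clsR (MonoidAlgebra (ZMod 2) G) ≠ 0 := by
  intro z hz h0
  let φ : FreeAbelianGroup (Pres (MonoidAlgebra (ZMod 2) G)) →+ ℝ :=
    FreeAbelianGroup.lift (prk F)
  have hle : AddSubgroup.closure (relSet (MonoidAlgebra (ZMod 2) G)) ≤ φ.ker := by
    rw [AddSubgroup.closure_le]
    rintro x ⟨a, b, c, f, g, hf, hg, hex, rfl⟩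
    change φ _ = 0
    simp only [φ, map_sub, map_add, FreeAbelianGroup.lift_apply_of]
    rw [prk_exact hS hF a b c f g hf hg hex, sub_self]
  let Φ : GGroup (MonoidAlgebra (ZMod 2) G) →+ ℝ := QuotientAddGroup.lift _ φ hle
  have h1 : Φ (clsR (MonoidAlgebra (ZMod 2) G)) = 1 := by
    change φ (FreeAbelianGroup.of _) = 1
    exact (FreeAbelianGroup.lift_apply_of _ _).trans (prk_free hF)
  have h2 := congrArg Φ h0
  rw [map_zsmul, h1, map_zero] at h2
  apply hz
  simpa using h2
end
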